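/- Let 0 < α < n, 1 < s < n/α, and f ∈ L^1(cap_{α,s}). Then there exists C = C(α,s,n) > 0 such that for all t > 0, cap_{α,s}({x : M_{cap_{α,s}} f(x) > t}) ≤ (C/t) ∫ |f| d cap_{α,s}. -/

import Mathlib

open scoped ENNReal
open Metric Set MeasureTheory

noncomputable section

/-- `ℝⁿ` as Euclidean space. -/
abbrev Rn (n : ℕ) := EuclideanSpace ℝ (Fin n)

/-- The Choquet integral of a nonnegative function `g` with respect to a
(monotone) set function `C`: `∫ g dC := ∫_0^∞ C({g > t}) dt`. -/
noncomputable def choquet {X : Type*} (C : Set X → ℝ≥0∞) (g : X → ℝ≥0∞) : ℝ≥0∞ :=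
  ∫⁻ t in Ioi (0 : ℝ), C {x | ENNReal.ofReal t < g x}

/-- The Choquet integral of `g` restricted to a set `A`. -/
noncomputable def choquetOn {X : Type*} (C : Set X → ℝ≥0∞) (A : Set X) (g : X → ℝ≥0∞) : ℝ≥0∞ :=
  ∫⁻ t in Ioi (0 : ℝ), C {x | x ∈ A ∧ ENNReal.ofReal t < g x}

/-- The `L^∞(C)` norm: `inf {λ > 0 : C({|f| > λ}) = 0}` (formulated in `ℝ≥0∞`). -/
noncomputable def choquetEssSup {X : Type*} (C : Set X → ℝ≥0∞) (f : X → ℝ) : ℝ≥0∞ :=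
  sInf {l : ℝ≥0∞ | C {x | l < ENNReal.ofReal |f x|} = 0}

/-- `C`-quasicontinuity of a function `f`. -/
def QuasiCont {X : Type*} [TopologicalSpace X] (C : Set X → ℝ≥0∞) (f : X → ℝ) : Prop :=
  ∀ ε : ℝ≥0∞, 0 < ε → ∃ U : Set X, IsOpen U ∧ C U < ε ∧ ContinuousOn f Uᶜ

/-- Membership in the capacitary space `L^p(C)`: `C`-quasicontinuous with
finite `p`-th power Choquet integral. -/
def MemChoquetLp {X : Type*} [TopologicalSpace X] (C : Set X → ℝ≥0∞) (p : ℝ) (f : X → ℝ) : Prop :=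
  QuasiCont C f ∧ choquet C (fun x => ENNReal.ofReal |f x| ^ p) < ∞

/-- The constant `γ(α)` in the Riesz kernel `I_α = (1/γ(α)) |x|^{α-n}`. -/
noncomputable def rieszConst (n : ℕ) (α : ℝ) : ℝ :=
  Real.pi ^ ((n : ℝ) / 2) * 2 ^ α * Real.Gamma (α / 2) / Real.Gamma (((n : ℝ) - α) / 2)

/-- The Riesz potential `I_α * φ` of a nonnegative function `φ`. -/
noncomputable def rieszPot (n : ℕ) (α : ℝ) (φ : Rn n → ℝ≥0∞) (x : Rn n) : ℝ≥0∞ :=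
  ∫⁻ y, ENNReal.ofReal ((1 / rieszConst n α) * ‖x - y‖ ^ (α - (n : ℝ))) * φ y

/-- The Riesz capacity `cap_{α,s}(E) = inf {‖φ‖_{L^s}^s : φ ≥ 0, I_α*φ ≥ 1 on E}`. -/
noncomputable def rieszCap (n : ℕ) (α s : ℝ) (E : Set (Rn n)) : ℝ≥0∞ :=
  ⨅ (φ : Rn n → ℝ≥0∞) (_ : ∀ x ∈ E, 1 ≤ rieszPot n α φ x), ∫⁻ y, φ y ^ s

/-- The capacitary maximal function associated to the Riesz capacity:
`M_{cap_{α,s}} g(x) := sup_{r>0} (1/(cap_{α,s}(B(0,1)) r^{n-αs})) ∫_{B(x,r)} g d cap_{α,s}`. -/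
noncomputable def maximalCap (n : ℕ) (α s : ℝ) (g : Rn n → ℝ≥0∞) (x : Rn n) : ℝ≥0∞ :=
  ⨆ (r : ℝ) (_ : 0 < r),
    (rieszCap n α s (ball (0 : Rn n) 1) * ENNReal.ofReal (r ^ ((n : ℝ) - α * s)))⁻¹ *
      choquetOn (rieszCap n α s) (ball x r) g

/-- `Γ_{α,s}(g) := inf {‖φ‖_{L^s}^s : φ ≥ 0, I_α * φ ≥ g everywhere}`. -/
noncomputable def rieszGammaFunc (n : ℕ) (α s : ℝ) (g : Rn n → ℝ≥0∞) : ℝ≥0∞ :=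
  ⨅ (φ : Rn n → ℝ≥0∞) (_ : ∀ x, g x ≤ rieszPot n α φ x), ∫⁻ y, φ y ^ s
/-!
Split the Choquet integral of `g` over the dyadic levels `2 ^ k` and choose a nearly optimal test
function `φ k` for each set `{g > 2 ^ k}`. A point `x` where the maximal function exceeds `t` is of
one of two kinds. Either the potential of some `φ k` with `2 ^ k > t / 4` is bounded below at `x`;
multiples of the `φ k` are then test functions for the set of such points. Or, by a Harnack-type
comparison, only the restriction of each of these `φ k` to `ball x (2 * r)` matters for the capacity
of `{g > 2 ^ k} ∩ ball x r`; then the measure with density `∑ k, 2 ^ k * φ k ^ s` has mass at least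
a multiple of `t * r ^ (n - α * s)` in `ball x (2 * r)`, and a Vitali covering bounds the capacity
of the set of such points.
-/

section LIntegral

variable {X : Type*} [MeasurableSpace X]

lemma exists_measurable_le_forall_lintegral_eq_of_absolutelyContinuous (μ : Measure X)
    [SigmaFinite μ] (f : X → ℝ≥0∞) :
    ∃ g : X → ℝ≥0∞, Measurable g ∧ g ≤ f ∧
      ∀ ν : Measure X, ν ≪ μ → ∫⁻ x, f x ∂ν = ∫⁻ x, g x ∂ν := by
  obtain ⟨g, hg, hgf, hint⟩ := exists_measurable_le_forall_setLIntegral_eq (μ := μ) f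
  refine ⟨g, hg, hgf, fun ν hν => le_antisymm ?_ (lintegral_mono hgf)⟩
  rw [← iSup_lintegral_measurable_le_eq_lintegral]
  refine iSup₂_le fun h hh => iSup_le fun hhf => lintegral_mono_ae (hν.ae_le ?_)
  refine ae_le_of_forall_setLIntegral_le_of_sigmaFinite hh fun A _ _ => ?_
  exact (lintegral_mono hhf).trans (hint A).le

lemma lintegral_indicator_rpow (μ : Measure X) {s : ℝ} (hs : 0 < s) {A : Set X}
    (hA : MeasurableSet A) (f : X → ℝ≥0∞) :
    ∫⁻ x, A.indicator f x ^ s ∂μ = ∫⁻ x in A, f x ^ s ∂μ := by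
  rw [← lintegral_indicator hA]
  refine lintegral_congr fun x => ?_
  by_cases hx : x ∈ A <;> simp [hx, hs]

variable {E : Type*} [NormedAddCommGroup E] [NormedSpace ℝ E] [FiniteDimensional ℝ E]
  [MeasurableSpace E] [BorelSpace E] (μ : Measure E) [μ.IsAddHaarMeasure]

lemma lintegral_comp_inv_smul_sub (f : E → ℝ≥0∞) (x : E) {r : ℝ} (hr : 0 < r) :
    ∫⁻ y, f (r⁻¹ • (y - x)) ∂μ =
      ENNReal.ofReal (r ^ Module.finrank ℝ E) * ∫⁻ y, f y ∂μ := by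
  have hr' : r⁻¹ ≠ 0 := inv_ne_zero hr.ne'
  rw [lintegral_sub_right_eq_self (fun y => f (r⁻¹ • y)) x,
    ← (measurableEmbedding_const_smul₀ hr').lintegral_map, Measure.map_addHaar_smul μ hr',
    lintegral_smul_measure, inv_pow, inv_inv, abs_of_pos (pow_pos hr _), smul_eq_mul]

end LIntegral

section VitaliCovering

variable {X : Type*} [PseudoMetricSpace X] [TopologicalSpace.SeparableSpace X] [MeasurableSpace X]
  [OpensMeasurableSpace X] {κ : OuterMeasure X} {ν : Measure X}

lemma outerMeasure_le_measure_univ_of_closedBall_le {H : Set X} {R : ℝ}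
    (h : ∀ x ∈ H, ∃ r, 0 < r ∧ r ≤ R ∧ κ (closedBall x (5 * r)) ≤ ν (closedBall x r)) :
    κ H ≤ ν univ := by
  choose! ρ hρ_pos hρ_le hρ using h
  obtain ⟨u, huH, hdisj, hcov⟩ := Vitali.exists_disjoint_subfamily_covering_enlargement_closedBall
    H id ρ R hρ_le 5 (by norm_num)
  have hu : u.Countable := hdisj.countable_of_nonempty_interior fun x hx =>
    ⟨x, ball_subset_interior_closedBall (mem_ball_self (hρ_pos x (huH hx)))⟩
  have hsub : H ⊆ ⋃ x ∈ u, closedBall x (5 * ρ x) := fun x hx => by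
    obtain ⟨b, hb, hxb⟩ := hcov x hx
    exact mem_biUnion hb (hxb (mem_closedBall_self (hρ_pos x hx).le))
  calc κ H ≤ ∑' x : u, κ (closedBall (x : X) (5 * ρ x)) :=
        (measure_mono hsub).trans (measure_biUnion_le κ hu _)
    _ ≤ ∑' x : u, ν (closedBall (x : X) (ρ x)) :=
        ENNReal.tsum_le_tsum fun x => hρ x (huH x.2)
    _ = ν (⋃ x ∈ u, closedBall x (ρ x)) :=
        (measure_biUnion hu hdisj fun _ _ => measurableSet_closedBall).symm
    _ ≤ ν univ := measure_mono (subset_univ _)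

lemma mul_outerMeasure_setOf_mul_rpow_lt_measure_ball_le {c : ℝ≥0∞} {d : ℝ} (hd : 0 < d)
    (hκ : ∀ x r, 0 < r → κ (ball x r) ≤ c * ENNReal.ofReal (r ^ d)) (hc : c ≠ 0)
    (hν : ν univ ≠ ∞) {a : ℝ≥0∞} (ha : a ≠ 0) :
    a * κ {x | ∃ r, 0 < r ∧ a * (c * ENNReal.ofReal (r ^ d)) < ν (ball x r)} ≤
      ENNReal.ofReal (6 ^ d) * ν univ := by
  refine outerMeasure_le_measure_univ_of_closedBall_le (κ := a • κ)
    (ν := ENNReal.ofReal (6 ^ d) • ν) (R := (ν univ / (a * c)).toReal ^ d⁻¹) ?_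
  rintro x ⟨r, hr, hlt⟩
  refine ⟨r, hr, ?_, ?_⟩
  · have hrd : ENNReal.ofReal (r ^ d) ≤ ν univ / (a * c) := by
      rw [ENNReal.le_div_iff_mul_le (Or.inl (mul_ne_zero ha hc)) (Or.inr hν), mul_comm, mul_assoc]
      exact hlt.le.trans (measure_mono (subset_univ _))
    rw [ENNReal.ofReal_le_iff_le_toReal (ENNReal.div_ne_top hν (mul_ne_zero ha hc))] at hrd
    exact (Real.le_rpow_inv_iff_of_pos hr.le ENNReal.toReal_nonneg hd).2 hrd
  · calc a * κ (closedBall x (5 * r)) ≤ a * (c * ENNReal.ofReal ((6 * r) ^ d)) := by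
          gcongr
          exact (measure_mono (closedBall_subset_ball (by linarith))).trans (hκ x _ (by positivity))
      _ = ENNReal.ofReal (6 ^ d) * (a * (c * ENNReal.ofReal (r ^ d))) := by
          rw [Real.mul_rpow (by norm_num) hr.le, ENNReal.ofReal_mul (by positivity)]
          ring
      _ ≤ ENNReal.ofReal (6 ^ d) * ν (closedBall x r) := by
          gcongr
          exact hlt.le.trans (measure_mono ball_subset_closedBall)

end VitaliCovering

section Dyadic

variable {h : ℝ → ℝ≥0∞}

lemma lintegral_Ioi_le_tsum_zpow_of_antitone (hh : Antitone h) :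
    ∫⁻ t in Ioi (0 : ℝ), h t ≤ ∑' k : ℤ, ENNReal.ofReal (2 ^ k) * h (2 ^ k) := by
  have hcover : Ioi (0 : ℝ) ⊆ ⋃ k : ℤ, Ioc ((2 : ℝ) ^ k) (2 ^ (k + 1)) := fun t ht =>
    mem_iUnion.2 (exists_mem_Ioc_zpow ht one_lt_two)
  refine (lintegral_mono_set hcover).trans ((lintegral_iUnion_le _ _).trans ?_)
  refine ENNReal.tsum_le_tsum fun k => ?_
  calc ∫⁻ t in Ioc ((2 : ℝ) ^ k) (2 ^ (k + 1)), h t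
      ≤ ∫⁻ _ in Ioc ((2 : ℝ) ^ k) (2 ^ (k + 1)), h (2 ^ k) :=
        setLIntegral_mono' measurableSet_Ioc fun t ht => hh ht.1.le
    _ = ENNReal.ofReal (2 ^ k) * h (2 ^ k) := by
        rw [setLIntegral_const, Real.volume_Ioc, mul_comm, zpow_add_one₀ two_ne_zero, mul_two,
          add_sub_cancel_right]

lemma tsum_zpow_le_two_mul_lintegral_Ioi_of_antitone (hh : Antitone h) :
    ∑' k : ℤ, ENNReal.ofReal (2 ^ k) * h (2 ^ k) ≤ 2 * ∫⁻ t in Ioi (0 : ℝ), h t := by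
  have hmono : Monotone fun k : ℤ => (2 : ℝ) ^ (k - 1) := fun a b hab =>
    zpow_le_zpow_right₀ one_le_two (by lia)
  have hdisj : Pairwise (Function.onFun Disjoint fun k : ℤ => Ioc ((2 : ℝ) ^ (k - 1)) (2 ^ k)) := by
    simpa only [Order.succ_eq_add_one, add_sub_cancel_right] using
      hmono.pairwise_disjoint_on_Ioc_succ
  have hterm : ∀ k : ℤ, ENNReal.ofReal (2 ^ k) * h (2 ^ k) ≤
      2 * ∫⁻ t in Ioc ((2 : ℝ) ^ (k - 1)) (2 ^ k), h t := fun k => by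
    have hlength : (2 : ℝ) ^ k = 2 * (2 ^ k - 2 ^ (k - 1)) := by
      rw [zpow_sub_one₀ two_ne_zero]
      ring
    calc ENNReal.ofReal (2 ^ k) * h (2 ^ k)
        = 2 * ∫⁻ _ in Ioc ((2 : ℝ) ^ (k - 1)) (2 ^ k), h (2 ^ k) := by
          rw [setLIntegral_const, Real.volume_Ioc, mul_comm (h _), ← mul_assoc,
            ← ENNReal.ofReal_ofNat 2, ← ENNReal.ofReal_mul zero_le_two, ← hlength]
      _ ≤ _ := by
          refine mul_le_mul_right (setLIntegral_mono' measurableSet_Ioc fun t ht => ?_) 2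
          exact hh ht.2
  calc ∑' k : ℤ, ENNReal.ofReal (2 ^ k) * h (2 ^ k)
      ≤ 2 * ∑' k : ℤ, ∫⁻ t in Ioc ((2 : ℝ) ^ (k - 1)) (2 ^ k), h t := by
        rw [← ENNReal.tsum_mul_left]
        exact ENNReal.tsum_le_tsum hterm
    _ = 2 * ∫⁻ t in ⋃ k : ℤ, Ioc ((2 : ℝ) ^ (k - 1)) (2 ^ k), h t := by
        rw [lintegral_iUnion (fun _ => measurableSet_Ioc) hdisj]
    _ ≤ 2 * ∫⁻ t in Ioi (0 : ℝ), h t := by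
        gcongr
        exact iUnion_subset fun k t ht => lt_trans (by positivity) ht.1

lemma tsum_zpow_of_le_le (u : ℝ) :
    ∑' k : ℤ, (if (2 : ℝ) ^ k ≤ u then ENNReal.ofReal (2 ^ k) else 0) ≤ 2 * ENNReal.ofReal u := by
  have hanti : Antitone ((Iic u).indicator (1 : ℝ → ℝ≥0∞)) := fun a b hab => by
    by_cases hb : b ≤ u
    · simp [hb, hab.trans hb]
    · simp [hb]
  have hbound := tsum_zpow_le_two_mul_lintegral_Ioi_of_antitone hanti
  rw [lintegral_indicator_one measurableSet_Iic, Measure.restrict_apply measurableSet_Iic,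
    inter_comm, Ioi_inter_Iic, Real.volume_Ioc, sub_zero] at hbound
  simpa only [indicator_apply, mem_Iic, Pi.one_apply, mul_ite, mul_one, mul_zero] using hbound

end Dyadic

section RieszPotential

variable {n : ℕ} {α : ℝ} {φ ψ : Rn n → ℝ≥0∞} {x y : Rn n} {r : ℝ}

/-- The Riesz kernel `I_α`. For `α < n` its value at the origin is the junk value `0`, since
`0 ^ (α - n) = 0`. -/
def rieszKernel (n : ℕ) (α : ℝ) (x : Rn n) : ℝ≥0∞ :=
  ENNReal.ofReal ((1 / rieszConst n α) * ‖x‖ ^ (α - (n : ℝ)))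

lemma rieszPot_eq_lintegral_rieszKernel_mul (φ : Rn n → ℝ≥0∞) (x : Rn n) :
    rieszPot n α φ x = ∫⁻ y, rieszKernel n α (x - y) * φ y :=
  rfl

lemma rieszConst_pos (hα0 : 0 < α) (hαn : α < n) : 0 < rieszConst n α :=
  div_pos (mul_pos (by positivity) (Real.Gamma_pos_of_pos (half_pos hα0)))
    (Real.Gamma_pos_of_pos (half_pos (sub_pos.2 hαn)))

lemma measurable_rieszKernel (n : ℕ) (α : ℝ) : Measurable (rieszKernel n α) := by
  unfold rieszKernel
  fun_prop

lemma rieszKernel_le_of_norm_le (hαn : α ≤ n) (hx : x ≠ 0) (hxy : ‖x‖ ≤ ‖y‖) :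
    rieszKernel n α y ≤ rieszKernel n α x := by
  unfold rieszKernel
  rw [ENNReal.ofReal_mul' (by positivity), ENNReal.ofReal_mul' (by positivity)]
  exact mul_le_mul_right (ENNReal.ofReal_le_ofReal
    (Real.rpow_le_rpow_of_nonpos (norm_pos_iff.2 hx) hxy (sub_nonpos.2 hαn))) _

lemma rieszKernel_smul (hr : 0 ≤ r) (x : Rn n) :
    rieszKernel n α (r • x) = ENNReal.ofReal (r ^ (α - (n : ℝ))) * rieszKernel n α x := by
  unfold rieszKernel
  rw [norm_smul, Real.norm_of_nonneg hr, Real.mul_rpow hr (norm_nonneg _), mul_left_comm,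
    ENNReal.ofReal_mul (by positivity)]

lemma rieszKernel_le_of_norm_le_two_mul (hαn : α ≤ n) (hx : x ≠ 0) (hxy : ‖x‖ ≤ 2 * ‖y‖) :
    rieszKernel n α y ≤ 2 ^ ((n : ℝ) - α) * rieszKernel n α x := by
  have hhalf : ‖(2 : ℝ)⁻¹ • x‖ ≤ ‖y‖ := by
    rw [norm_smul, norm_inv, Real.norm_ofNat]
    linarith
  calc rieszKernel n α y ≤ rieszKernel n α ((2 : ℝ)⁻¹ • x) :=
        rieszKernel_le_of_norm_le hαn (by simpa using hx) hhalf
    _ = 2 ^ ((n : ℝ) - α) * rieszKernel n α x := by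
        rw [rieszKernel_smul (by norm_num), Real.inv_rpow zero_le_two, ← Real.rpow_neg zero_le_two,
          neg_sub, ← ENNReal.ofReal_rpow_of_pos two_pos, ENNReal.ofReal_ofNat]

lemma rieszPot_mono (h : φ ≤ ψ) (x : Rn n) : rieszPot n α φ x ≤ rieszPot n α ψ x :=
  lintegral_mono fun y => mul_le_mul_right (h y) _

lemma rieszPot_const_mul {a : ℝ≥0∞} (ha : a ≠ ∞) (φ : Rn n → ℝ≥0∞) (x : Rn n) :
    rieszPot n α (fun y => a * φ y) x = a * rieszPot n α φ x := by
  unfold rieszPot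
  rw [← lintegral_const_mul' _ _ ha]
  exact lintegral_congr fun y => mul_left_comm _ _ _

lemma exists_measurable_le_rieszPot_eq (φ : Rn n → ℝ≥0∞) :
    ∃ ψ, Measurable ψ ∧ ψ ≤ φ ∧ ∀ α, rieszPot n α ψ = rieszPot n α φ := by
  obtain ⟨ψ, hψ, hψφ, hint⟩ :=
    exists_measurable_le_forall_lintegral_eq_of_absolutelyContinuous volume φ
  refine ⟨ψ, hψ, hψφ, fun α => funext fun x => ?_⟩
  have hK : Measurable fun y => rieszKernel n α (x - y) :=
    (measurable_rieszKernel n α).comp (measurable_const.sub measurable_id)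
  have hpot : ∀ f : Rn n → ℝ≥0∞, rieszPot n α f x =
      ∫⁻ y, f y ∂(volume.withDensity fun y => rieszKernel n α (x - y)) := fun f =>
    (lintegral_withDensity_eq_lintegral_mul_non_measurable _ hK
      (Filter.Eventually.of_forall fun _ => ENNReal.ofReal_lt_top) f).symm
  rw [hpot, hpot, hint _ (withDensity_absolutelyContinuous _ _)]

lemma rieszPot_comp_inv_smul_sub (φ : Rn n → ℝ≥0∞) (x z : Rn n) (hr : 0 < r) :
    rieszPot n α (fun y => φ (r⁻¹ • (y - x))) z =
      ENNReal.ofReal (r ^ α) * rieszPot n α φ (r⁻¹ • (z - x)) := by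
  have hz : ∀ y : Rn n, z - y = r • (r⁻¹ • (z - x) - r⁻¹ • (y - x)) := fun y => by
    rw [← smul_sub, smul_inv_smul₀ hr.ne', sub_sub_sub_cancel_right]
  have hexp : r ^ α = r ^ (α - (n : ℝ)) * r ^ n := by
    rw [← Real.rpow_natCast, ← Real.rpow_add hr, sub_add_cancel]
  calc rieszPot n α (fun y => φ (r⁻¹ • (y - x))) z
      = ENNReal.ofReal (r ^ (α - (n : ℝ))) * ∫⁻ y, rieszKernel n α
          (r⁻¹ • (z - x) - r⁻¹ • (y - x)) * φ (r⁻¹ • (y - x)) := by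
        rw [rieszPot_eq_lintegral_rieszKernel_mul, ← lintegral_const_mul' _ _ ENNReal.ofReal_ne_top]
        refine lintegral_congr fun y => ?_
        rw [hz y, rieszKernel_smul hr.le, mul_assoc]
    _ = ENNReal.ofReal (r ^ α) * rieszPot n α φ (r⁻¹ • (z - x)) := by
        rw [lintegral_comp_inv_smul_sub volume
            (fun w => rieszKernel n α (r⁻¹ • (z - x) - w) * φ w) x hr, finrank_euclideanSpace_fin,
          ← mul_assoc, hexp, ENNReal.ofReal_mul (by positivity),
          rieszPot_eq_lintegral_rieszKernel_mul]

lemma rieszPot_le_rieszPot_indicator_ball_add (hαn : α ≤ n) (hφ : Measurable φ)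
    (hy : y ∈ ball x r) :
    rieszPot n α φ y ≤ rieszPot n α ((ball x (2 * r)).indicator φ) y +
      2 ^ ((n : ℝ) - α) * rieszPot n α φ x := by
  have hfar : ∀ z ∉ ball x (2 * r),
      rieszKernel n α (y - z) ≤ 2 ^ ((n : ℝ) - α) * rieszKernel n α (x - z) := fun z hz => by
    rw [mem_ball, not_lt, dist_comm, dist_eq_norm] at hz
    rw [mem_ball, dist_comm, dist_eq_norm] at hy
    have htri : ‖x - z‖ ≤ ‖x - y‖ + ‖y - z‖ := norm_sub_le_norm_sub_add_norm_sub x y z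
    have hr : 0 < r := (norm_nonneg _).trans_lt hy
    exact rieszKernel_le_of_norm_le_two_mul hαn (norm_pos_iff.1 (by linarith)) (by linarith)
  have hK : Measurable fun z => rieszKernel n α (x - z) :=
    (measurable_rieszKernel n α).comp (measurable_const.sub measurable_id)
  simp only [rieszPot_eq_lintegral_rieszKernel_mul]
  have hKφ : Measurable fun z => rieszKernel n α (x - z) * φ z := hK.mul hφ
  rw [← lintegral_const_mul _ hKφ, ← lintegral_add_right _ (hKφ.const_mul _)]
  refine lintegral_mono fun z => ?_
  by_cases hz : z ∈ ball x (2 * r)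
  · simp [hz]
  · simpa [hz, mul_assoc] using mul_le_mul_left (hfar z hz) (φ z)

lemma mul_volume_ball_le_rieszPot_indicator_ball (hα0 : 0 < α) (hαn : α < n)
    (hy : y ∈ ball x r) :
    ENNReal.ofReal ((1 / rieszConst n α) * (2 * r) ^ (α - (n : ℝ))) * volume (ball x r) ≤
      rieszPot n α ((ball x r).indicator 1) y := by
  have hn : 0 < n := by exact_mod_cast hα0.trans hαn
  have : NeZero n := ⟨hn.ne'⟩
  have hγ := rieszConst_pos hα0 hαn
  have hkernel : ∀ᵐ z ∂(volume.restrict (ball x r)),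
      ENNReal.ofReal ((1 / rieszConst n α) * (2 * r) ^ (α - (n : ℝ))) ≤
        rieszKernel n α (y - z) := by
    filter_upwards [ae_restrict_mem measurableSet_ball,
      ae_restrict_of_ae (Measure.ae_ne volume y)] with z hz hzy
    have hyz : ‖y - z‖ ≤ 2 * r := by
      rw [← dist_eq_norm]
      linarith [dist_triangle_right y z x, mem_ball.1 hy, mem_ball.1 hz]
    have hpow : (2 * r) ^ (α - (n : ℝ)) ≤ ‖y - z‖ ^ (α - (n : ℝ)) :=
      Real.rpow_le_rpow_of_nonpos (norm_pos_iff.2 (sub_ne_zero.2 hzy.symm)) hyz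
        (sub_nonpos.2 hαn.le)
    unfold rieszKernel
    gcongr
  calc _ = ∫⁻ _ in ball x r,
          ENNReal.ofReal ((1 / rieszConst n α) * (2 * r) ^ (α - (n : ℝ))) :=
        (setLIntegral_const _ _).symm
    _ ≤ ∫⁻ z in ball x r, rieszKernel n α (y - z) := lintegral_mono_ae hkernel
    _ = rieszPot n α ((ball x r).indicator 1) y := by
        rw [rieszPot_eq_lintegral_rieszKernel_mul, ← lintegral_indicator measurableSet_ball]
        refine lintegral_congr fun z => ?_
        by_cases hz : z ∈ ball x r <;> simp [hz]

end RieszPotential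

section RieszCapacity

variable {n : ℕ} {α s : ℝ} {E F : Set (Rn n)}

lemma rieszCap_le_lintegral_rpow {φ : Rn n → ℝ≥0∞} (h : ∀ x ∈ E, 1 ≤ rieszPot n α φ x) :
    rieszCap n α s E ≤ ∫⁻ y, φ y ^ s :=
  iInf₂_le φ h

lemma rieszCap_mono (h : E ⊆ F) : rieszCap n α s E ≤ rieszCap n α s F :=
  le_iInf₂ fun _ hφ => rieszCap_le_lintegral_rpow fun x hx => hφ x (h hx)

lemma rieszCap_empty (hs : 0 < s) : rieszCap n α s ∅ = 0 := by
  have hzero := rieszCap_le_lintegral_rpow (n := n) (α := α) (s := s) (E := ∅) (φ := 0) (by simp)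
  simpa [hs] using hzero

lemma rieszCap_le_rpow_mul_lintegral_rpow (hs : 0 ≤ s) {φ : Rn n → ℝ≥0∞} {a : ℝ≥0∞} (ha : a ≠ ∞)
    (h : ∀ x ∈ E, 1 ≤ a * rieszPot n α φ x) :
    rieszCap n α s E ≤ a ^ s * ∫⁻ y, φ y ^ s := by
  calc rieszCap n α s E ≤ ∫⁻ y, (a * φ y) ^ s :=
        rieszCap_le_lintegral_rpow fun x hx => (h x hx).trans_eq (rieszPot_const_mul ha φ x).symm
    _ = a ^ s * ∫⁻ y, φ y ^ s := by
        simp only [ENNReal.mul_rpow_of_nonneg _ _ hs]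
        exact lintegral_const_mul' _ _ (ENNReal.rpow_ne_top_of_nonneg hs ha)

lemma exists_measurable_lintegral_rpow_lt (hs : 0 ≤ s) {b : ℝ≥0∞} (hb : rieszCap n α s E < b) :
    ∃ φ : Rn n → ℝ≥0∞, Measurable φ ∧ (∀ x ∈ E, 1 ≤ rieszPot n α φ x) ∧ ∫⁻ y, φ y ^ s < b := by
  simp only [rieszCap, iInf_lt_iff] at hb
  obtain ⟨φ, hφ, hlt⟩ := hb
  obtain ⟨ψ, hψ, hψφ, hpot⟩ := exists_measurable_le_rieszPot_eq φ
  refine ⟨ψ, hψ, fun x hx => hpot α ▸ hφ x hx, (lintegral_mono fun y => ?_).trans_lt hlt⟩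
  exact ENNReal.rpow_le_rpow (hψφ y) hs

lemma exists_measurable_tsum_mul_lintegral_rpow_lt {ι : Type*} [Countable ι] (hs : 0 ≤ s)
    {E : ι → Set (Rn n)} {w : ι → ℝ≥0∞} (hw0 : ∀ i, w i ≠ 0) (hw : ∀ i, w i ≠ ∞) {b : ℝ≥0∞}
    (hb : ∑' i, w i * rieszCap n α s (E i) < b) :
    ∃ φ : ι → Rn n → ℝ≥0∞, (∀ i, Measurable (φ i)) ∧
      (∀ i, ∀ x ∈ E i, 1 ≤ rieszPot n α (φ i) x) ∧ ∑' i, w i * ∫⁻ y, φ i y ^ s < b := by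
  obtain ⟨δ, hδ_pos, hδ⟩ :=
    ENNReal.exists_pos_tsum_mul_lt_of_countable (tsub_pos_of_lt hb).ne' w hw
  have hE : ∀ i, rieszCap n α s (E i) ≠ ∞ := fun i h =>
    ENNReal.ne_top_of_tsum_ne_top hb.ne_top i (by rw [h, ENNReal.mul_top (hw0 i)])
  have htest : ∀ i, ∃ φ : Rn n → ℝ≥0∞, Measurable φ ∧ (∀ x ∈ E i, 1 ≤ rieszPot n α φ x) ∧
      ∫⁻ y, φ y ^ s < rieszCap n α s (E i) + δ i := fun i =>
    exists_measurable_lintegral_rpow_lt hs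
      (ENNReal.lt_add_right (hE i) (by simpa using (hδ_pos i).ne'))
  choose φ hφ hφE henergy using htest
  refine ⟨φ, hφ, hφE, ?_⟩
  calc ∑' i, w i * ∫⁻ y, φ i y ^ s
      ≤ ∑' i, w i * (rieszCap n α s (E i) + δ i) :=
        ENNReal.tsum_le_tsum fun i => mul_le_mul_right (henergy i).le _
    _ = ∑' i, w i * rieszCap n α s (E i) + ∑' i, w i * δ i := by
        simp only [mul_add, ENNReal.tsum_add]
    _ < b := by
        rw [add_comm]
        exact lt_tsub_iff_right.1 hδ

lemma rieszCap_iUnion_le {ι : Type*} [Countable ι] (hs : 0 < s) (E : ι → Set (Rn n)) :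
    rieszCap n α s (⋃ i, E i) ≤ ∑' i, rieszCap n α s (E i) := by
  refine le_of_forall_gt fun b hb => ?_
  obtain ⟨φ, hφ, hφE, henergy⟩ := exists_measurable_tsum_mul_lintegral_rpow_lt hs.le
    (w := fun _ : ι => 1) (by simp) (by simp) (by simpa only [one_mul] using hb)
  refine lt_of_le_of_lt ?_ henergy
  -- The `ℓ^s`-combination of the test functions dominates each of them, and its energy is the
  -- sum of theirs.
  have htest : ∀ x ∈ ⋃ i, E i, 1 ≤ rieszPot n α (fun y => (∑' i, φ i y ^ s) ^ s⁻¹) x := by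
    intro x hx
    obtain ⟨i, hi⟩ := mem_iUnion.1 hx
    refine (hφE i x hi).trans (rieszPot_mono (fun y => ?_) x)
    exact (ENNReal.le_rpow_inv_iff hs).2 (ENNReal.le_tsum (f := fun i => φ i y ^ s) i)
  calc rieszCap n α s (⋃ i, E i) ≤ ∫⁻ y, ((∑' i, φ i y ^ s) ^ s⁻¹) ^ s :=
        rieszCap_le_lintegral_rpow htest
    _ = ∑' i, 1 * ∫⁻ y, φ i y ^ s := by
        simp only [ENNReal.rpow_inv_rpow hs.ne', one_mul]
        exact lintegral_tsum fun i => ((hφ i).pow_const s).aemeasurable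

/-- The Riesz capacity as an outer measure, giving access to the library of outer measures. -/
def rieszCapOuterMeasure (n : ℕ) (α : ℝ) (hs : 0 < s) : OuterMeasure (Rn n) where
  measureOf := rieszCap n α s
  empty := rieszCap_empty hs
  mono := rieszCap_mono
  iUnion_nat E _ := rieszCap_iUnion_le hs E

lemma rieszCap_preimage_inv_smul_sub_le (hs : 0 ≤ s) (E : Set (Rn n)) (x : Rn n) {r : ℝ}
    (hr : 0 < r) :
    rieszCap n α s ((fun z => r⁻¹ • (z - x)) ⁻¹' E) ≤
      rieszCap n α s E * ENNReal.ofReal (r ^ ((n : ℝ) - α * s)) := by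
  have hscale : ENNReal.ofReal (r ^ (-α)) * ENNReal.ofReal (r ^ α) = 1 := by
    rw [← ENNReal.ofReal_mul (by positivity), ← Real.rpow_add hr, neg_add_cancel, Real.rpow_zero,
      ENNReal.ofReal_one]
  have henergy : ENNReal.ofReal (r ^ (-α)) ^ s * ENNReal.ofReal (r ^ n) =
      ENNReal.ofReal (r ^ ((n : ℝ) - α * s)) := by
    rw [ENNReal.ofReal_rpow_of_pos (by positivity), ← ENNReal.ofReal_mul (by positivity),
      ← Real.rpow_mul hr.le, ← Real.rpow_natCast, ← Real.rpow_add hr]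
    ring_nf
  have hr_ne : ENNReal.ofReal (r ^ ((n : ℝ) - α * s)) ≠ 0 :=
    (ENNReal.ofReal_pos.2 (by positivity)).ne'
  rw [← ENNReal.div_le_iff hr_ne ENNReal.ofReal_ne_top]
  refine le_iInf₂ fun φ hφ => ENNReal.div_le_of_le_mul ?_
  calc rieszCap n α s ((fun z => r⁻¹ • (z - x)) ⁻¹' E)
      ≤ ENNReal.ofReal (r ^ (-α)) ^ s * ∫⁻ y, φ (r⁻¹ • (y - x)) ^ s := by
        refine rieszCap_le_rpow_mul_lintegral_rpow hs ENNReal.ofReal_ne_top fun z hz => ?_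
        rw [rieszPot_comp_inv_smul_sub φ x z hr, ← mul_assoc, hscale, one_mul]
        exact hφ _ hz
    _ = (∫⁻ y, φ y ^ s) * ENNReal.ofReal (r ^ ((n : ℝ) - α * s)) := by
        rw [lintegral_comp_inv_smul_sub volume (fun y => φ y ^ s) x hr, finrank_euclideanSpace_fin,
          ← mul_assoc, henergy, mul_comm]

lemma rieszCap_ball_le (hs : 0 ≤ s) (x : Rn n) {r : ℝ} (hr : 0 < r) :
    rieszCap n α s (ball x r) ≤
      rieszCap n α s (ball 0 1) * ENNReal.ofReal (r ^ ((n : ℝ) - α * s)) := by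
  refine (rieszCap_mono fun z hz => ?_).trans (rieszCap_preimage_inv_smul_sub_le hs _ x hr)
  rw [mem_ball, dist_eq_norm] at hz
  rwa [mem_preimage, mem_ball_zero_iff, norm_smul, norm_inv, Real.norm_of_nonneg hr.le,
    inv_mul_lt_iff₀ hr, mul_one]

lemma rieszCap_ball_ne_top (hα0 : 0 < α) (hαn : α < n) (hs : 0 < s) (x : Rn n) {r : ℝ}
    (hr : 0 < r) : rieszCap n α s (ball x r) ≠ ∞ := by
  have hγ := rieszConst_pos hα0 hαn
  set m := ENNReal.ofReal ((1 / rieszConst n α) * (2 * r) ^ (α - (n : ℝ))) * volume (ball x r)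
  have hm0 : m ≠ 0 :=
    mul_ne_zero (ENNReal.ofReal_pos.2 (by positivity)).ne' (measure_ball_pos volume _ hr).ne'
  have hm : m ≠ ∞ := ENNReal.mul_ne_top ENNReal.ofReal_ne_top measure_ball_lt_top.ne
  have hpot : ∀ y ∈ ball x r, 1 ≤ m⁻¹ * rieszPot n α ((ball x r).indicator 1) y := fun y hy => by
    rw [← ENNReal.inv_mul_cancel hm0 hm]
    exact mul_le_mul_right (mul_volume_ball_le_rieszPot_indicator_ball hα0 hαn hy) _
  refine ne_top_of_le_ne_top ?_
    (rieszCap_le_rpow_mul_lintegral_rpow hs.le (ENNReal.inv_ne_top.2 hm0) hpot)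
  rw [lintegral_indicator_rpow volume hs measurableSet_ball]
  simp only [Pi.one_apply, ENNReal.one_rpow, setLIntegral_one]
  exact ENNReal.mul_ne_top
    (ENNReal.rpow_ne_top_of_nonneg hs.le (ENNReal.inv_ne_top.2 hm0)) measure_ball_lt_top.ne

lemma rieszCap_eq_zero_of_rieszCap_ball_eq_zero (hs : 0 < s)
    (hball : rieszCap n α s (ball 0 1) = 0) (E : Set (Rn n)) : rieszCap n α s E = 0 := by
  have hsub : E ⊆ ⋃ k : ℕ, ball (0 : Rn n) (k + 1) := by
    rw [iUnion_ball_nat_succ]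
    exact subset_univ E
  refine measure_mono_null (μ := rieszCapOuterMeasure n α hs) hsub (measure_iUnion_null fun k => ?_)
  have hk := rieszCap_ball_le (α := α) hs.le (0 : Rn n) (r := k + 1) (by positivity)
  rw [hball, zero_mul] at hk
  exact le_antisymm hk zero_le

/-- By the Harnack-type comparison of potentials, the part of `φ` far from `x` contributes at most
one half to the potential on the ball. -/
lemma rieszCap_ball_inter_le (hαn : α ≤ n) (hs : 0 < s) {φ : Rn n → ℝ≥0∞} (hφ : Measurable φ)
    (hφE : ∀ y ∈ E, 1 ≤ rieszPot n α φ y) {x : Rn n} {r : ℝ}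
    (hx : 2 * 2 ^ ((n : ℝ) - α) * rieszPot n α φ x ≤ 1) :
    rieszCap n α s (ball x r ∩ E) ≤ 2 ^ s * ∫⁻ z in ball x (2 * r), φ z ^ s := by
  have hnear : ∀ y ∈ ball x r ∩ E,
      1 ≤ 2 * rieszPot n α ((ball x (2 * r)).indicator φ) y := fun y hy => by
    have hsum : (1 : ℝ≥0∞) + 1 ≤ 2 * rieszPot n α ((ball x (2 * r)).indicator φ) y + 1 :=
      calc (1 : ℝ≥0∞) + 1 = 2 * 1 := by norm_num
        _ ≤ 2 * (rieszPot n α ((ball x (2 * r)).indicator φ) y +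
              2 ^ ((n : ℝ) - α) * rieszPot n α φ x) := by
            gcongr
            exact (hφE y hy.2).trans (rieszPot_le_rieszPot_indicator_ball_add hαn hφ hy.1)
        _ ≤ _ := by
            rw [mul_add, ← mul_assoc]
            gcongr
    exact (ENNReal.add_le_add_iff_right ENNReal.one_ne_top).1 hsum
  calc rieszCap n α s (ball x r ∩ E)
      ≤ 2 ^ s * ∫⁻ z, (ball x (2 * r)).indicator φ z ^ s :=
        rieszCap_le_rpow_mul_lintegral_rpow hs.le ENNReal.ofNat_ne_top hnear
    _ = 2 ^ s * ∫⁻ z in ball x (2 * r), φ z ^ s := by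
        rw [lintegral_indicator_rpow volume hs measurableSet_ball]

end RieszCapacity

section WeakType

variable {n : ℕ} {α s : ℝ} {g : Rn n → ℝ≥0∞} {φ : ℤ → Rn n → ℝ≥0∞}

/-- `φ k` is a measurable test function for the dyadic superlevel set `{g > 2 ^ k}`. -/
structure IsDyadicTest (α : ℝ) (g : Rn n → ℝ≥0∞) (φ : ℤ → Rn n → ℝ≥0∞) : Prop where
  measurable (k : ℤ) : Measurable (φ k)
  one_le_rieszPot (k : ℤ) : ∀ x ∈ {x | ENNReal.ofReal (2 ^ k) < g x}, 1 ≤ rieszPot n α (φ k) x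

/-- The measure with density `∑ k, 2 ^ k * φ k ^ s`. For optimal dyadic test functions of `g` its
total mass is the dyadic sum approximating the Choquet integral of `g`. -/
def dyadicEnergy (s : ℝ) (φ : ℤ → Rn n → ℝ≥0∞) : Measure (Rn n) :=
  Measure.sum fun k : ℤ => ENNReal.ofReal (2 ^ k) • volume.withDensity fun y => φ k y ^ s

lemma dyadicEnergy_apply (φ : ℤ → Rn n → ℝ≥0∞) {B : Set (Rn n)} (hB : MeasurableSet B) :
    dyadicEnergy s φ B = ∑' k : ℤ, ENNReal.ofReal (2 ^ k) * ∫⁻ y in B, φ k y ^ s := by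
  simp [dyadicEnergy, Measure.sum_apply _ hB, withDensity_apply _ hB]

lemma dyadicEnergy_univ (φ : ℤ → Rn n → ℝ≥0∞) :
    dyadicEnergy s φ univ = ∑' k : ℤ, ENNReal.ofReal (2 ^ k) * ∫⁻ y, φ k y ^ s := by
  simp only [dyadicEnergy_apply φ MeasurableSet.univ, Measure.restrict_univ]

lemma exists_isDyadicTest_dyadicEnergy_univ_lt (hs : 0 ≤ s) {b : ℝ≥0∞}
    (hb : 2 * choquet (rieszCap n α s) g < b) :
    ∃ φ, IsDyadicTest α g φ ∧ dyadicEnergy s φ univ < b := by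
  have hanti : Antitone fun t : ℝ => rieszCap n α s {x | ENNReal.ofReal t < g x} :=
    fun _ _ hab => rieszCap_mono fun _ hx => (ENNReal.ofReal_le_ofReal hab).trans_lt hx
  obtain ⟨φ, hφ, hφg, henergy⟩ := exists_measurable_tsum_mul_lintegral_rpow_lt hs
    (fun k : ℤ => (ENNReal.ofReal_pos.2 (zpow_pos two_pos k)).ne')
    (fun _ => ENNReal.ofReal_ne_top)
    ((tsum_zpow_le_two_mul_lintegral_Ioi_of_antitone hanti).trans_lt hb)
  exact ⟨φ, ⟨hφ, hφg⟩, (dyadicEnergy_univ φ).trans_lt henergy⟩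

lemma IsDyadicTest.choquetOn_ball_le (hφ : IsDyadicTest α g φ) (hαn : α ≤ n) (hs : 0 < s)
    {x : Rn n} {u : ℝ}
    (hx : ∀ k : ℤ, u < 2 ^ k → 2 * 2 ^ ((n : ℝ) - α) * rieszPot n α (φ k) x ≤ 1) (r : ℝ) :
    choquetOn (rieszCap n α s) (ball x r) g ≤
      2 * ENNReal.ofReal u * rieszCap n α s (ball x r) +
        2 ^ s * dyadicEnergy s φ (ball x (2 * r)) := by
  have hanti : Antitone fun t : ℝ =>
      rieszCap n α s {y | y ∈ ball x r ∧ ENNReal.ofReal t < g y} := fun _ _ hab =>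
    rieszCap_mono fun _ hy => ⟨hy.1, (ENNReal.ofReal_le_ofReal hab).trans_lt hy.2⟩
  have hterm : ∀ k : ℤ, ENNReal.ofReal (2 ^ k) *
      rieszCap n α s {y | y ∈ ball x r ∧ ENNReal.ofReal (2 ^ k) < g y} ≤
      (if (2 : ℝ) ^ k ≤ u then ENNReal.ofReal (2 ^ k) else 0) * rieszCap n α s (ball x r) +
        2 ^ s * (ENNReal.ofReal (2 ^ k) * ∫⁻ z in ball x (2 * r), φ k z ^ s) := fun k => by
    by_cases hk : (2 : ℝ) ^ k ≤ u
    · rw [if_pos hk]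
      exact le_add_right (mul_le_mul_right (rieszCap_mono fun _ hy => hy.1) _)
    · rw [if_neg hk, zero_mul, zero_add, mul_left_comm]
      exact mul_le_mul_right (rieszCap_ball_inter_le hαn hs (hφ.measurable k)
        (hφ.one_le_rieszPot k) (hx k (not_le.1 hk))) _
  calc choquetOn (rieszCap n α s) (ball x r) g
      ≤ ∑' k : ℤ, ENNReal.ofReal (2 ^ k) *
          rieszCap n α s {y | y ∈ ball x r ∧ ENNReal.ofReal (2 ^ k) < g y} :=
        lintegral_Ioi_le_tsum_zpow_of_antitone hanti
    _ ≤ _ := ENNReal.tsum_le_tsum hterm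
    _ ≤ _ := by
        rw [ENNReal.tsum_add, ENNReal.tsum_mul_right, ENNReal.tsum_mul_left,
          ← dyadicEnergy_apply φ measurableSet_ball]
        gcongr
        exact tsum_zpow_of_le_le u

lemma lt_maximalCap_iff (hα0 : 0 < α) (hαn : α < n) (hs : 0 < s)
    (hball : rieszCap n α s (ball 0 1) ≠ 0) {a : ℝ≥0∞} {x : Rn n} :
    a < maximalCap n α s g x ↔ ∃ r, 0 < r ∧
      a * (rieszCap n α s (ball 0 1) * ENNReal.ofReal (r ^ ((n : ℝ) - α * s))) <
        choquetOn (rieszCap n α s) (ball x r) g := by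
  simp only [maximalCap, lt_iSup_iff, exists_prop]
  refine exists_congr fun r => and_congr_right fun hr => ?_
  have hrd : ENNReal.ofReal (r ^ ((n : ℝ) - α * s)) ≠ 0 :=
    (ENNReal.ofReal_pos.2 (by positivity)).ne'
  rw [mul_comm, ← div_eq_mul_inv, ENNReal.lt_div_iff_mul_lt (Or.inl (mul_ne_zero hball hrd))
    (Or.inl (ENNReal.mul_ne_top (rieszCap_ball_ne_top hα0 hαn hs 0 one_pos)
      ENNReal.ofReal_ne_top))]

lemma IsDyadicTest.setOf_lt_maximalCap_subset (hφ : IsDyadicTest α g φ) (hα0 : 0 < α)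
    (hαn : α < n) (hs : 0 < s) (hball : rieszCap n α s (ball 0 1) ≠ 0) {t : ℝ} (ht : 0 ≤ t) :
    {x | ENNReal.ofReal t < maximalCap n α s g x} ⊆
      (⋃ k ∈ {k : ℤ | t / 4 < 2 ^ k},
        {x | 1 ≤ 2 * 2 ^ ((n : ℝ) - α) * rieszPot n α (φ k) x}) ∪
      {x | ∃ r, 0 < r ∧ ENNReal.ofReal (t / 2) *
          (rieszCap n α s (ball 0 1) * ENNReal.ofReal (r ^ ((n : ℝ) - α * s))) <
        ((ENNReal.ofReal (2 ^ ((n : ℝ) - α * s)) * 2 ^ s) • dyadicEnergy s φ) (ball x r)} := by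
  intro x hx
  refine or_iff_not_imp_left.2 fun hxG => ?_
  simp only [mem_iUnion, mem_ofPred_eq, exists_prop, not_exists, not_and, not_le] at hxG
  obtain ⟨r, hr, hlt⟩ := (lt_maximalCap_iff hα0 hαn hs hball).1 hx
  set Q := rieszCap n α s (ball 0 1) * ENNReal.ofReal (r ^ ((n : ℝ) - α * s)) with hQ
  have hhalf : 2 * ENNReal.ofReal (t / 4) = ENNReal.ofReal (t / 2) := by
    rw [← ENNReal.ofReal_ofNat 2, ← ENNReal.ofReal_mul zero_le_two]
    congr 1
    ring
  have hlocal : choquetOn (rieszCap n α s) (ball x r) g ≤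
      ENNReal.ofReal (t / 2) * Q + 2 ^ s * dyadicEnergy s φ (ball x (2 * r)) := by
    refine (hφ.choquetOn_ball_le hαn.le hs (fun k hk => (hxG k hk).le) r).trans ?_
    rw [hhalf]
    gcongr
    exact rieszCap_ball_le hs.le x hr
  have hmass : ENNReal.ofReal (t / 2) * Q < 2 ^ s * dyadicEnergy s φ (ball x (2 * r)) := by
    refine lt_of_add_lt_add_left (a := ENNReal.ofReal (t / 2) * Q) ?_
    rw [← add_mul, ← ENNReal.ofReal_add (by positivity) (by positivity), add_halves]
    exact hlt.trans_le hlocal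
  refine ⟨2 * r, by positivity, ?_⟩
  rw [Measure.smul_apply, smul_eq_mul, mul_assoc (ENNReal.ofReal _),
    Real.mul_rpow zero_le_two hr.le, ENNReal.ofReal_mul (by positivity),
    mul_left_comm (rieszCap _ _ _ _), ← hQ, mul_left_comm]
  exact (ENNReal.mul_lt_mul_iff_right (ENNReal.ofReal_pos.2 (by positivity)).ne'
    ENNReal.ofReal_ne_top).2 hmass

lemma mul_rieszCap_iUnion_setOf_one_le_mul_rieszPot_le (hs : 0 < s) (φ : ℤ → Rn n → ℝ≥0∞)
    {a : ℝ≥0∞} (ha : a ≠ ∞) {u : ℝ} :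
    ENNReal.ofReal u *
        rieszCap n α s (⋃ k ∈ {k : ℤ | u < 2 ^ k}, {x | 1 ≤ a * rieszPot n α (φ k) x}) ≤
      a ^ s * dyadicEnergy s φ univ := by
  set G : ℤ → Set (Rn n) := fun k => {x | 1 ≤ a * rieszPot n α (φ k) x}
  calc ENNReal.ofReal u * rieszCap n α s (⋃ k ∈ {k : ℤ | u < 2 ^ k}, G k)
      ≤ ENNReal.ofReal u * ∑' k : {k : ℤ | u < 2 ^ k}, rieszCap n α s (G k) := by
        rw [biUnion_eq_iUnion]
        gcongr
        exact rieszCap_iUnion_le hs _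
    _ ≤ ∑' k : {k : ℤ | u < 2 ^ k}, ENNReal.ofReal (2 ^ (k : ℤ)) * rieszCap n α s (G k) := by
        rw [← ENNReal.tsum_mul_left]
        exact ENNReal.tsum_le_tsum fun k => mul_le_mul_left (ENNReal.ofReal_le_ofReal k.2.le) _
    _ ≤ ∑' k : ℤ, ENNReal.ofReal (2 ^ k) * rieszCap n α s (G k) :=
        ENNReal.tsum_comp_le_tsum_of_injective Subtype.val_injective _
    _ ≤ ∑' k : ℤ, ENNReal.ofReal (2 ^ k) * (a ^ s * ∫⁻ y, φ k y ^ s) :=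
        ENNReal.tsum_le_tsum fun k => mul_le_mul_right
          (rieszCap_le_rpow_mul_lintegral_rpow hs.le ha fun _ hx => hx) _
    _ = a ^ s * dyadicEnergy s φ univ := by
        rw [dyadicEnergy_univ, ← ENNReal.tsum_mul_left]
        exact tsum_congr fun k => mul_left_comm _ _ _

/-- The constant in the weak-type bound: the first summand comes from the points where the potential
of some test function is large, the second from the Vitali covering. -/
def weakTypeConst (n : ℕ) (α s : ℝ) : ℝ≥0∞ :=
  4 * (2 * 2 ^ ((n : ℝ) - α)) ^ s +
    2 * (ENNReal.ofReal (6 ^ ((n : ℝ) - α * s)) * (ENNReal.ofReal (2 ^ ((n : ℝ) - α * s)) * 2 ^ s))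

lemma weakTypeConst_ne_zero (n : ℕ) (α s : ℝ) : weakTypeConst n α s ≠ 0 := by
  have h6 : 0 < (6 : ℝ) ^ ((n : ℝ) - α * s) := by positivity
  have h2 : 0 < (2 : ℝ) ^ ((n : ℝ) - α * s) := by positivity
  simp [weakTypeConst, h6, h2]

lemma two_mul_rpow_ne_top (hαn : α ≤ n) : (2 : ℝ≥0∞) * 2 ^ ((n : ℝ) - α) ≠ ∞ :=
  ENNReal.mul_ne_top ENNReal.ofNat_ne_top
    (ENNReal.rpow_ne_top_of_nonneg (sub_nonneg.2 hαn) ENNReal.ofNat_ne_top)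

lemma weakTypeConst_ne_top (hαn : α ≤ n) (hs : 0 ≤ s) : weakTypeConst n α s ≠ ∞ := by
  have hA := ENNReal.rpow_ne_top_of_nonneg hs (two_mul_rpow_ne_top hαn)
  have h2 := ENNReal.rpow_ne_top_of_nonneg hs (ENNReal.ofNat_ne_top (n := 2))
  unfold weakTypeConst
  finiteness

lemma IsDyadicTest.mul_rieszCap_setOf_lt_maximalCap_le (hφ : IsDyadicTest α g φ) (hα0 : 0 < α)
    (hαn : α < n) (hs : 0 < s) (hd : 0 < (n : ℝ) - α * s)
    (hball : rieszCap n α s (ball 0 1) ≠ 0) (hfin : dyadicEnergy s φ univ ≠ ∞) {t : ℝ}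
    (ht : 0 < t) :
    ENNReal.ofReal t * rieszCap n α s {x | ENNReal.ofReal t < maximalCap n α s g x} ≤
      weakTypeConst n α s * dyadicEnergy s φ univ := by
  set A : ℝ≥0∞ := 2 * 2 ^ ((n : ℝ) - α)
  set K := ENNReal.ofReal (2 ^ ((n : ℝ) - α * s)) * 2 ^ s
  set G := ⋃ k ∈ {k : ℤ | t / 4 < 2 ^ k}, {x | 1 ≤ A * rieszPot n α (φ k) x}
  set H := {x : Rn n | ∃ r, 0 < r ∧ ENNReal.ofReal (t / 2) *
      (rieszCap n α s (ball 0 1) * ENNReal.ofReal (r ^ ((n : ℝ) - α * s))) <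
        (K • dyadicEnergy s φ) (ball x r)}
  have hG : ENNReal.ofReal (t / 4) * rieszCap n α s G ≤ A ^ s * dyadicEnergy s φ univ :=
    mul_rieszCap_iUnion_setOf_one_le_mul_rieszPot_le hs φ (two_mul_rpow_ne_top hαn.le)
  have hK : K ≠ ∞ := ENNReal.mul_ne_top ENNReal.ofReal_ne_top
    (ENNReal.rpow_ne_top_of_nonneg hs.le ENNReal.ofNat_ne_top)
  have hH : ENNReal.ofReal (t / 2) * rieszCap n α s H ≤
      ENNReal.ofReal (6 ^ ((n : ℝ) - α * s)) * (K * dyadicEnergy s φ univ) :=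
    mul_outerMeasure_setOf_mul_rpow_lt_measure_ball_le (κ := rieszCapOuterMeasure n α hs) hd
      (fun x r hr => rieszCap_ball_le hs.le x hr) hball (ENNReal.mul_ne_top hK hfin)
      (ENNReal.ofReal_pos.2 (by positivity)).ne'
  have hscale : ∀ m : ℝ, 0 < m →
      ENNReal.ofReal t = ENNReal.ofReal m * ENNReal.ofReal (t / m) := fun m hm => by
    rw [← ENNReal.ofReal_mul hm.le, mul_div_cancel₀ t hm.ne']
  calc ENNReal.ofReal t * rieszCap n α s {x | ENNReal.ofReal t < maximalCap n α s g x}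
      ≤ ENNReal.ofReal t * (rieszCap n α s G + rieszCap n α s H) := by
        gcongr
        exact (rieszCap_mono (hφ.setOf_lt_maximalCap_subset hα0 hαn hs hball ht.le)).trans
          (measure_union_le (μ := rieszCapOuterMeasure n α hs) G H)
    _ = 4 * (ENNReal.ofReal (t / 4) * rieszCap n α s G) +
          2 * (ENNReal.ofReal (t / 2) * rieszCap n α s H) := by
        rw [mul_add, ← mul_assoc 4, ← mul_assoc 2, ← ENNReal.ofReal_ofNat 4,
          ← ENNReal.ofReal_ofNat 2, ← hscale 4 (by norm_num), ← hscale 2 (by norm_num)]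
    _ ≤ 4 * (A ^ s * dyadicEnergy s φ univ) +
          2 * (ENNReal.ofReal (6 ^ ((n : ℝ) - α * s)) * (K * dyadicEnergy s φ univ)) := by
        gcongr
    _ = weakTypeConst n α s * dyadicEnergy s φ univ := by
        unfold weakTypeConst
        ring

lemma mul_rieszCap_setOf_lt_maximalCap_le (hα0 : 0 < α) (hαn : α < n) (hs : 0 < s)
    (hd : 0 < (n : ℝ) - α * s) (g : Rn n → ℝ≥0∞) {t : ℝ} (ht : 0 < t) :
    ENNReal.ofReal t * rieszCap n α s {x | ENNReal.ofReal t < maximalCap n α s g x} ≤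
      weakTypeConst n α s * (2 * choquet (rieszCap n α s) g) := by
  rcases eq_or_ne (rieszCap n α s (ball 0 1)) 0 with hball | hball
  · rw [rieszCap_eq_zero_of_rieszCap_ball_eq_zero hs hball, mul_zero]
    exact zero_le
  rw [← ENNReal.div_le_iff' (weakTypeConst_ne_zero n α s) (weakTypeConst_ne_top hαn.le hs.le)]
  refine le_of_forall_gt_imp_ge_of_dense fun b hb => ?_
  obtain ⟨φ, hφ, henergy⟩ := exists_isDyadicTest_dyadicEnergy_univ_lt hs.le hb
  refine le_trans (ENNReal.div_le_of_le_mul' ?_) henergy.le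
  exact hφ.mul_rieszCap_setOf_lt_maximalCap_le hα0 hαn hs hd hball henergy.ne_top ht

end WeakType

theorem statement16_general (n : ℕ) (α s : ℝ) (hα0 : 0 < α) (hαn : α < n) (hs : 0 < s)
    (hsn : s < n / α) :
    ∃ C : ℝ, 0 < C ∧ ∀ g : Rn n → ℝ≥0∞, ∀ t : ℝ, 0 < t →
      rieszCap n α s {x | ENNReal.ofReal t < maximalCap n α s g x} ≤
        (ENNReal.ofReal C / ENNReal.ofReal t) * choquet (rieszCap n α s) g := by
  have hd : 0 < (n : ℝ) - α * s := by
    rw [lt_div_iff₀ hα0] at hsn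
    linarith
  have hC0 : weakTypeConst n α s * 2 ≠ 0 := mul_ne_zero (weakTypeConst_ne_zero n α s) two_ne_zero
  have hC : weakTypeConst n α s * 2 ≠ ∞ :=
    ENNReal.mul_ne_top (weakTypeConst_ne_top hαn.le hs.le) ENNReal.ofNat_ne_top
  refine ⟨(weakTypeConst n α s * 2).toReal, ENNReal.toReal_pos hC0 hC, fun g t ht => ?_⟩
  rw [ENNReal.ofReal_toReal hC, ← ENNReal.mul_div_right_comm,
    ENNReal.le_div_iff_mul_le (Or.inl (ENNReal.ofReal_pos.2 ht).ne') (Or.inl ENNReal.ofReal_ne_top),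
    mul_comm, mul_assoc]
  exact mul_rieszCap_setOf_lt_maximalCap_le hα0 hαn hs hd g ht

/-- Weak-type `(1,1)` bound for the Riesz capacitary maximal
function on `L^1(cap_{α,s})`. -/
theorem statement16 (n : ℕ) (α s : ℝ) (hα0 : 0 < α) (hαn : α < n)
    (hs1 : 1 < s) (hsn : s < n / α) :
    ∃ C : ℝ, 0 < C ∧ ∀ f : Rn n → ℝ, MemChoquetLp (rieszCap n α s) 1 f →
      ∀ t : ℝ, 0 < t →
        rieszCap n α s
            {x | ENNReal.ofReal t < maximalCap n α s (fun y => ENNReal.ofReal |f y|) x} ≤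
          (ENNReal.ofReal C / ENNReal.ofReal t) *
            choquet (rieszCap n α s) (fun x => ENNReal.ofReal |f x|) := by
  obtain ⟨C, hC, hweak⟩ := statement16_general n α s hα0 hαn (one_pos.trans hs1) hsn
  exact ⟨C, hC, fun f _ t ht => hweak (fun y => ENNReal.ofReal |f y|) t ht⟩

end
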